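/- Let r = p^m with p prime, let K = 𝔽_r((X)) with T := X⁻¹, let Ω be a fixed algebraic closure of K, let K^sep ⊆ Ω be the separable closure of K, let C_∞ be the completion of Ω with respect to the spectral norm, and let ι : Ω → C_∞ be the canonical embedding. Let t ≥ 1 and let N be a nilpotent t×t matrix with entries in C_∞. Then there exists a unique 𝔽_r-algebra homomorphism φ : K^sep → M_t(C_∞) such that (i) φ(T) = ι(T)·1 + N, (ii) the restriction of φ to K is continuous (where M_t(C_∞) carries the topology of entrywise convergence), and (iii) for every x ∈ K^sep the matrix φ(x) − ι(x)·1 is nilpotent. Moreover φ is injective. -/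

import Mathlib

set_option synthInstance.maxHeartbeats 1000000
set_option maxHeartbeats 1000000

/-- The element `T := X⁻¹` of `K = 𝔽_r((X))`, a uniformizer at the infinite place of
`𝔽_r(T)`. -/
noncomputable def laurentT (Fr : Type*) [Field Fr] : LaurentSeries Fr :=
  (HahnSeries.single (1 : ℤ) (1 : Fr))⁻¹

/-- The canonical algebra structure of `𝔽_r((X))` on an intermediate field of an extension
of `𝔽_r((X))` (registered explicitly to help typeclass inference). -/
noncomputable local instance laurentSeriesIntermediateFieldAlgebra (Fr : Type*) [Field Fr]
    (Ω : Type*) [Field Ω] [Algebra (LaurentSeries Fr) Ω]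
    (S : IntermediateField (LaurentSeries Fr) Ω) : Algebra (LaurentSeries Fr) S :=
  inferInstanceAs (Algebra (LaurentSeries Fr) S.toSubalgebra)

/-!
The singleton `{T}` is a `p`-basis of `K = 𝔽_r((X))`, and `p`-bases survive separable extensions, so
`K^sep = ⨁_{j < q} T ^ j • (K^sep) ^ q` for every power `q` of `p`. As `(a - b) ^ q = a ^ q - b ^ q`
for commuting `a` and `b`, the matrix `φ x - ι x` is nilpotent exactly when `φ` and `ι` agree on
`x ^ q` for a large `q`, and any `q ≥ t` is large enough. Condition (iii) therefore prescribes `φ`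
on `(K^sep) ^ q` and leaves only its value at `T` free, subject to `φ(T) ^ q = ι(T ^ q)`. Continuity
on `K` is automatic: the coordinates of a Laurent series in `K = ⨁_{j < p} X ^ j • K ^ p` are
continuous at `0`, so continuity can be tested on `p`-th powers.
-/

section Nilpotent

theorem matrix_pow_card_eq_zero_of_isNilpotent {n R : Type*} [Fintype n] [DecidableEq n]
    [CommRing R] [IsReduced R] {M : Matrix n n R} (hM : IsNilpotent M) :
    M ^ Fintype.card n = 0 := by
  have hcharpoly : M.charpoly = Polynomial.X ^ Fintype.card n := by
    have hcoeff := Polynomial.isNilpotent_iff.1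
      (Matrix.isNilpotent_charpoly_sub_pow_of_isNilpotent hM)
    exact sub_eq_zero.1 (Polynomial.ext fun i => (hcoeff i).eq_zero)
  simpa only [hcharpoly, map_pow, Polynomial.aeval_X] using M.aeval_self_charpoly

variable {p : ℕ} [Fact p.Prime] {A : Type*} [Ring A] [CharP A p] {a b : A}

theorem pow_char_pow_eq_of_sub_pow_eq_zero (hab : Commute a b) {d : ℕ} (h : (a - b) ^ d = 0) :
    a ^ p ^ d = b ^ p ^ d := by
  have hd : d ≤ p ^ d := (Nat.lt_pow_self (Fact.out : p.Prime).one_lt).le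
  rw [← sub_eq_zero, ← sub_pow_expChar_pow_of_commute p d hab, pow_eq_zero_of_le hd h]

theorem isNilpotent_sub_iff_exists_pow_char_pow_eq (p : ℕ) [Fact p.Prime] [CharP A p]
    (hab : Commute a b) : IsNilpotent (a - b) ↔ ∃ k, a ^ p ^ k = b ^ p ^ k := by
  refine ⟨fun ⟨d, hd⟩ => ⟨d, pow_char_pow_eq_of_sub_pow_eq_zero hab hd⟩, fun ⟨k, hk⟩ => ⟨p ^ k, ?_⟩⟩
  rw [sub_pow_expChar_pow_of_commute p k hab, hk, sub_self]

end Nilpotent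

theorem pow_mem_of_fieldRange_frobenius {p : ℕ} {S : Type*} [Field S] [ExpChar S p]
    (R : Subalgebra (frobenius S p).fieldRange S) (x : S) : x ^ p ∈ R :=
  R.algebraMap_mem ⟨x ^ p, x, rfl⟩

theorem mem_adjoin_pow_expChar_of_isSeparable (K : Type*) {S : Type*} [Field K] [Field S]
    [Algebra K S] [Algebra.IsSeparable K S] (p : ℕ) [ExpChar K p] (x : S) :
    x ∈ Algebra.adjoin K {x ^ p} := by
  rw [← IntermediateField.adjoin_simple_toSubalgebra_of_isAlgebraic
      (Algebra.IsAlgebraic.isAlgebraic _), IntermediateField.mem_toSubalgebra,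
    ← IntermediateField.adjoin_simple_eq_adjoin_pow_expChar_of_isSeparable' K S x p]
  exact IntermediateField.mem_adjoin_simple_self K x

/-- The singleton `{T}` is a `p`-basis of the field `S` of characteristic `p`: `S = S ^ p [T]` and
`T ∉ S ^ p`, so that `1, T, …, T ^ (p - 1)` is a basis of `S` over its subfield `S ^ p`. -/
structure IsPBasis (p : ℕ) {S : Type*} [Field S] [ExpChar S p] (T : S) : Prop where
  adjoin_eq_top : Algebra.adjoin (frobenius S p).fieldRange {T} = ⊤
  pow_ne : ∀ z : S, z ^ p ≠ T

namespace IsPBasis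

variable {p : ℕ} [Fact p.Prime] {S : Type*} [Field S] [CharP S p] {T : S}

@[elab_as_elim]
theorem induction_on (hT : IsPBasis p T) {P : S → Prop} (x : S) (gen : P T)
    (pow : ∀ y, P (y ^ p)) (add : ∀ y z, P y → P z → P (y + z))
    (mul : ∀ y z, P y → P z → P (y * z)) : P x := by
  have hx : x ∈ Algebra.adjoin (frobenius S p).fieldRange {T} := hT.adjoin_eq_top ▸ trivial
  induction hx using Algebra.adjoin_induction with
  | mem y hy => exact Set.mem_singleton_iff.1 hy ▸ gen
  | algebraMap r => obtain ⟨_, y, rfl⟩ := r; exact pow y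
  | add y z _ _ hy hz => exact add y z hy hz
  | mul y z _ _ hy hz => exact mul y z hy hz

theorem inv (hT : IsPBasis p T) : IsPBasis p T⁻¹ where
  adjoin_eq_top := by
    set R := Algebra.adjoin (frobenius S p).fieldRange {T⁻¹}
    have hp : p ≠ 0 := (Fact.out : p.Prime).ne_zero
    have hT0 : T ≠ 0 := fun h => hT.pow_ne 0 (by rw [h, zero_pow hp])
    have hgen : T = T ^ p * T⁻¹ ^ (p - 1) := by
      rw [inv_pow, ← pow_sub₀ T hT0 (Nat.sub_le p 1),
        Nat.sub_sub_self (Nat.one_le_iff_ne_zero.2 hp), pow_one]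
    refine Algebra.eq_top_iff.2 fun x => hT.induction_on x ?_ (pow_mem_of_fieldRange_frobenius R)
      (fun _ _ => R.add_mem) (fun _ _ => R.mul_mem)
    rw [hgen]
    exact R.mul_mem (pow_mem_of_fieldRange_frobenius R T)
      (R.pow_mem (Algebra.self_mem_adjoin_singleton _ _) _)
  pow_ne z hz := hT.pow_ne z⁻¹ (by rw [inv_pow, hz, inv_inv])

theorem algebraMap_of_isSeparable {K : Type*} [Field K] [CharP K p] [Algebra K S]
    [Algebra.IsSeparable K S] {T : K} (hT : IsPBasis p T) : IsPBasis p (algebraMap K S T) where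
  adjoin_eq_top := by
    set R := Algebra.adjoin (frobenius S p).fieldRange {algebraMap K S T}
    have hK (c : K) : algebraMap K S c ∈ R :=
      hT.induction_on c (Algebra.self_mem_adjoin_singleton _ _)
        (fun y => by rw [map_pow]; exact pow_mem_of_fieldRange_frobenius R _)
        (fun y z hy hz => by rw [map_add]; exact R.add_mem hy hz)
        (fun y z hy hz => by rw [map_mul]; exact R.mul_mem hy hz)
    refine Algebra.eq_top_iff.2 fun x => ?_
    suffices hadjoin : ∀ y ∈ Algebra.adjoin K {x ^ p}, y ∈ R from
      hadjoin x (mem_adjoin_pow_expChar_of_isSeparable K p x)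
    intro y hy
    induction hy using Algebra.adjoin_induction with
    | mem z hz => exact Set.mem_singleton_iff.1 hz ▸ pow_mem_of_fieldRange_frobenius R x
    | algebraMap c => exact hK c
    | add _ _ _ _ hy hz => exact R.add_mem hy hz
    | mul _ _ _ _ hy hz => exact R.mul_mem hy hz
  pow_ne z hz := by
    have hmem := IntermediateField.mem_adjoin_simple_self K z
    rw [IntermediateField.adjoin_simple_eq_adjoin_pow_expChar_of_isSeparable' K S z p, hz,
      IntermediateField.adjoin_simple_eq_bot_iff.2 (algebraMap_mem _ _),
      IntermediateField.mem_bot] at hmem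
    obtain ⟨w, rfl⟩ := hmem
    exact hT.pow_ne w ((algebraMap K S).injective (by rw [map_pow, hz]))

section RingHomExt

variable {A : Type*} [Semiring A] {φ ψ : S →+* A}

theorem ringHom_ext_of_pow (hT : IsPBasis p T) (hgen : φ T = ψ T)
    (hpow : ∀ x, φ (x ^ p) = ψ (x ^ p)) : φ = ψ :=
  RingHom.ext fun x => hT.induction_on x hgen hpow
    (fun y z hy hz => by rw [map_add, map_add, hy, hz])
    (fun y z hy hz => by rw [map_mul, map_mul, hy, hz])

theorem ringHom_ext_of_pow_pow (hT : IsPBasis p T) (k : ℕ) (hgen : φ T = ψ T)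
    (hpow : ∀ x, φ (x ^ p ^ k) = ψ (x ^ p ^ k)) : φ = ψ := by
  induction k generalizing φ ψ with
  | zero => exact RingHom.ext fun x => by simpa using hpow x
  | succ k ih =>
    have hfrob : φ.comp (frobenius S p) = ψ.comp (frobenius S p) := by
      refine ih ?_ fun x => ?_
      · simp only [RingHom.comp_apply, frobenius_def, map_pow, hgen]
      · simpa only [RingHom.comp_apply, frobenius_def, ← pow_mul, ← pow_succ] using hpow x
    exact hT.ringHom_ext_of_pow hgen fun x => RingHom.congr_fun hfrob x

end RingHomExt

theorem ringHom_ext_of_sub_pow_eq_zero {A : Type*} [Ring A] [CharP A p] [Algebra S A]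
    {φ ψ : S →+* A} (hT : IsPBasis p T) (hgen : φ T = ψ T) {d : ℕ}
    (hφ : ∀ x, (φ x - algebraMap S A x) ^ d = 0) (hψ : ∀ x, (ψ x - algebraMap S A x) ^ d = 0) :
    φ = ψ := by
  refine hT.ringHom_ext_of_pow_pow d hgen fun x => ?_
  rw [map_pow, map_pow,
    pow_char_pow_eq_of_sub_pow_eq_zero (Algebra.commute_algebraMap_right x (φ x)) (hφ x),
    pow_char_pow_eq_of_sub_pow_eq_zero (Algebra.commute_algebraMap_right x (ψ x)) (hψ x)]

theorem minpoly_eq (hT : IsPBasis p T) :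
    minpoly (frobenius S p).fieldRange T =
      Polynomial.X ^ p - Polynomial.C ⟨T ^ p, T, rfl⟩ := by
  have hp : p.Prime := Fact.out
  refine (minpoly.eq_of_irreducible_of_monic (X_pow_sub_C_irreducible_of_prime hp ?_) ?_
    (Polynomial.monic_X_pow_sub_C _ hp.ne_zero)).symm
  · rintro ⟨_, z, rfl⟩ hz
    exact hT.pow_ne z (frobenius_inj S p (congrArg Subtype.val hz))
  · simp only [map_sub, map_pow, Polynomial.aeval_X, Polynomial.aeval_C]
    exact sub_self _

section Lift

variable {A : Type*} [CommRing A]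

theorem exists_ringHom_of_pow (hT : IsPBasis p T) (σ : S →+* A) {a : A} (ha : a ^ p = σ T) :
    ∃ φ : S →+* A, φ T = a ∧ ∀ x, φ (x ^ p) = σ x := by
  let L := (frobenius S p).fieldRange
  let root : L ≃+* S := (frobenius S p).rangeRestrictFieldEquiv.symm
  have root_pow (x : S) : root ⟨x ^ p, x, rfl⟩ = x :=
    (frobenius S p).rangeRestrictFieldEquiv.symm_apply_apply x
  let _ : Algebra L A := (σ.comp root.toRingHom).toAlgebra
  have hint : IsIntegral L T :=
    IsIntegral.of_pow (Fact.out : p.Prime).pos (isIntegral_algebraMap (x := (⟨T ^ p, T, rfl⟩ : L)))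
  let pb := PowerBasis.ofAdjoinEqTop hint hT.adjoin_eq_top
  have hgen : pb.gen = T := PowerBasis.ofAdjoinEqTop_gen hint hT.adjoin_eq_top
  have hroot : Polynomial.aeval a (minpoly L pb.gen) = 0 := by
    rw [hgen, hT.minpoly_eq, map_sub, map_pow, Polynomial.aeval_X, Polynomial.aeval_C, sub_eq_zero,
      ha]
    exact congrArg σ (root_pow T).symm
  refine ⟨pb.lift a hroot, ?_, fun x => ?_⟩
  · exact (congrArg (pb.lift a hroot) hgen).symm.trans (pb.lift_gen a hroot)
  · exact ((pb.lift a hroot).commutes ⟨x ^ p, x, rfl⟩).trans (congrArg σ (root_pow x))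

theorem exists_ringHom_of_pow_pow (hT : IsPBasis p T) (k : ℕ) (σ : S →+* A) {a : A}
    (ha : a ^ p ^ k = σ T) : ∃ φ : S →+* A, φ T = a ∧ ∀ x, φ (x ^ p ^ k) = σ x := by
  induction k generalizing a with
  | zero => exact ⟨σ, by simpa using ha.symm, by simp⟩
  | succ k ih =>
    obtain ⟨φ, hφT, hφ⟩ := ih (a := a ^ p) (by rw [← pow_mul, ← pow_succ', ha])
    obtain ⟨ψ, hψT, hψ⟩ := hT.exists_ringHom_of_pow φ hφT.symm
    exact ⟨ψ, hψT, fun x => by rw [pow_succ, pow_mul, hψ, hφ]⟩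

end Lift

theorem exists_ringHom_of_isNilpotent_sub {A : Type*} [Ring A] [CharP A p] [Algebra S A]
    (hT : IsPBasis p T) {a : A} (ha : IsNilpotent (a - algebraMap S A T)) :
    ∃ φ : S →+* A, φ T = a ∧ ∃ k, ∀ x, φ (x ^ p ^ k) = algebraMap S A (x ^ p ^ k) := by
  obtain ⟨k, hk⟩ := (isNilpotent_sub_iff_exists_pow_char_pow_eq p
    (Algebra.commute_algebraMap_right T a)).1 ha
  obtain ⟨φ, hφT, hφ⟩ := hT.exists_ringHom_of_pow_pow k
    ((algebraMap S (Algebra.adjoin S {a})).comp (iterateFrobenius S p k))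
    (a := ⟨a, Algebra.self_mem_adjoin_singleton S a⟩)
    (Subtype.ext (by simpa [iterateFrobenius_def] using hk))
  exact ⟨(Algebra.adjoin S {a}).val.toRingHom.comp φ, congrArg Subtype.val hφT, k,
    fun x => congrArg Subtype.val (hφ x)⟩

theorem exists_algHom_of_isNilpotent_sub {F A : Type*} [CommSemiring F] [ExpChar F p]
    [PerfectRing F p] [Algebra F S] [Ring A] [CharP A p] [Algebra S A] [Algebra F A]
    [IsScalarTower F S A] (hT : IsPBasis p T) {a : A} (ha : IsNilpotent (a - algebraMap S A T)) :
    ∃ φ : S →ₐ[F] A, φ T = a ∧ ∃ k, ∀ x, φ (x ^ p ^ k) = algebraMap S A (x ^ p ^ k) := by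
  obtain ⟨φ, hφT, k, hφ⟩ := hT.exists_ringHom_of_isNilpotent_sub ha
  have commutes (c : F) : φ (algebraMap F S c) = algebraMap F A c := by
    obtain ⟨d, rfl⟩ := (iterateFrobeniusEquiv F p k).surjective c
    rw [iterateFrobeniusEquiv_def, map_pow, hφ, ← map_pow, ← IsScalarTower.algebraMap_apply]
  exact ⟨{ φ with commutes' := commutes }, hφT, k, hφ⟩

end IsPBasis

section LaurentSeries

open Filter Topology WithZero

theorem hasBasis_nhds_zero_exp_neg {R : Type*} [Ring R] [Valued R ℤᵐ⁰]
    (hv : Function.Surjective (Valued.v : R → ℤᵐ⁰)) :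
    (𝓝 (0 : R)).HasBasis (fun _ : ℤ => True) fun n => {x | Valued.v x ≤ exp (-n)} := by
  refine ⟨fun s => ?_⟩
  simp only [true_and]
  constructor
  · intro hs
    obtain ⟨γ, hγ⟩ := Valued.mem_nhds_zero.1 hs
    refine ⟨1 - log (MonoidWithZeroHom.ValueGroup₀.embedding γ.1), fun x hx => hγ ?_⟩
    rw [Set.mem_ofPred_eq, Valuation.restrict_lt_iff_lt_embedding]
    refine lt_of_le_of_lt hx ?_
    rw [← lt_log_iff_exp_lt (by simp)]
    simp
  · rintro ⟨n, hn⟩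
    obtain ⟨y, hy⟩ := hv (exp (-n))
    have hy0 : Valued.v.restrict y ≠ 0 := by
      rw [Ne, Valuation.restrict_eq_zero_iff, hy]
      exact exp_ne_zero
    refine mem_of_superset ((Valued.isOpen_closedBall _ hy0).mem_nhds (by simp)) fun x hx => hn ?_
    rwa [Set.mem_ofPred_eq, Valuation.restrict_le_iff, hy] at hx

theorem powerSeries_pow_char_eq_expand_map {R : Type*} [CommRing R] {p : ℕ} [Fact p.Prime]
    [CharP R p] (g : PowerSeries R) :
    g ^ p = PowerSeries.expand p (Fact.out : p.Prime).ne_zero (g.map (frobenius R p)) := by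
  rw [← PowerSeries.map_expand]
  exact (MvPowerSeries.map_frobenius_expand p _).symm

theorem powerSeries_exists_eq_sum_X_pow_mul_pow {R : Type*} [CommRing R] {p : ℕ} [Fact p.Prime]
    [CharP R p] [PerfectRing R p] (f : PowerSeries R) :
    ∃ g : ℕ → PowerSeries R, f = ∑ j ∈ Finset.range p, PowerSeries.X ^ j * g j ^ p := by
  have hp : 0 < p := (Fact.out : p.Prime).pos
  refine ⟨fun j => PowerSeries.mk fun i =>
    (frobeniusEquiv R p).symm (PowerSeries.coeff (p * i + j) f), PowerSeries.ext fun n => ?_⟩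
  simp only [map_sum, powerSeries_pow_char_eq_expand_map, PowerSeries.coeff_X_pow_mul']
  rw [Finset.sum_eq_single_of_mem (n % p) (Finset.mem_range.2 (Nat.mod_lt n hp))]
  · have hn : n - n % p = p * (n / p) := by have := Nat.div_add_mod n p; omega
    rw [if_pos (Nat.mod_le n p), hn, PowerSeries.coeff_expand_mul, PowerSeries.coeff_map,
      PowerSeries.coeff_mk, Nat.div_add_mod, ← frobeniusEquiv_apply, RingEquiv.apply_symm_apply]
  · intro j hj hne
    split_ifs with hjn
    · refine PowerSeries.coeff_expand_of_not_dvd _ _ _ fun hdvd => hne ?_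
      rw [← (Nat.modEq_iff_dvd' hjn).2 hdvd, Nat.mod_eq_of_lt (Finset.mem_range.1 hj)]
    · rfl

variable {F : Type*} [Field F] {p : ℕ} [Fact p.Prime] [CharP F p]

theorem laurentSeries_exists_eq_sum_of_valuation_le [PerfectRing F p] {n : ℤ} {f : LaurentSeries F}
    (hf : Valued.v f ≤ exp (-(p * n))) :
    ∃ g : ℕ → LaurentSeries F, (∀ j, Valued.v (g j) ≤ exp (-n)) ∧
      f = ∑ j ∈ Finset.range p, (HahnSeries.single 1 1 : LaurentSeries F) ^ j * g j ^ p := by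
  have hv : Valued.v (HahnSeries.single (-(p * n)) 1 * f) ≤ (1 : ℤᵐ⁰) := by
    rw [map_mul, LaurentSeries.valuation_single_zpow]
    calc exp (-(-(p * n))) * Valued.v f
        ≤ exp (-(-(p * n))) * exp (-(p * n)) := by gcongr
      _ = 1 := by rw [← exp_add, neg_add_cancel, exp_zero]
  obtain ⟨P, hP⟩ := (LaurentSeries.val_le_one_iff_eq_coe F _).1 hv
  obtain ⟨G, hG⟩ := powerSeries_exists_eq_sum_X_pow_mul_pow (p := p) P
  refine ⟨fun j => HahnSeries.single n 1 * (G j : LaurentSeries F), fun j => ?_, ?_⟩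
  · rw [map_mul, LaurentSeries.valuation_single_zpow]
    exact mul_le_of_le_one_right' ((LaurentSeries.val_le_one_iff_eq_coe F _).2 ⟨G j, rfl⟩)
  · have hfP : f = HahnSeries.single (p * n) 1 * (P : LaurentSeries F) := by
      rw [hP, ← mul_assoc, HahnSeries.single_mul_single, add_neg_cancel, one_mul]
      exact (one_mul f).symm
    rw [hfP, hG, map_sum, Finset.mul_sum]
    refine Finset.sum_congr rfl fun j _ => ?_
    rw [map_mul, map_pow, map_pow, HahnSeries.ofPowerSeries_X, mul_pow, HahnSeries.single_pow n,
      nsmul_eq_mul, one_pow]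
    ring

theorem laurentSeries_valuation_le_iff_le_order {f : LaurentSeries F} (hf : f ≠ 0) {n : ℤ} :
    Valued.v f ≤ exp (-n) ↔ n ≤ f.order :=
  (LaurentSeries.valuation_le_iff_coeff_lt_eq_zero F).trans
    (HahnSeries.le_order_iff_forall hf).symm

theorem laurentSeries_exists_eq_sum_single_pow_mul_pow [PerfectRing F p] (f : LaurentSeries F) :
    ∃ g : ℕ → LaurentSeries F,
      f = ∑ j ∈ Finset.range p, (HahnSeries.single 1 1 : LaurentSeries F) ^ j * g j ^ p ∧
      ∀ n : ℤ, Valued.v f ≤ exp (-(p * n)) → ∀ j, Valued.v (g j) ≤ exp (-n) := by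
  have hp : 0 < p := (Fact.out : p.Prime).pos
  obtain rfl | hf := eq_or_ne f 0
  · exact ⟨0, by simp [zero_pow hp.ne'], by simp⟩
  · obtain ⟨g, hg, hsum⟩ := laurentSeries_exists_eq_sum_of_valuation_le (p := p) (n := f.order / p)
      ((laurentSeries_valuation_le_iff_le_order hf).2 (Int.mul_ediv_self_le (by omega)))
    refine ⟨g, hsum, fun n hn j => (hg j).trans (exp_le_exp.2 (neg_le_neg ?_))⟩
    rw [laurentSeries_valuation_le_iff_le_order hf, mul_comm] at hn
    exact (Int.le_ediv_iff_mul_le (by omega)).2 hn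

theorem laurentSeries_exists_tendsto_eq_sum (F : Type*) [Field F] (p : ℕ) [Fact p.Prime]
    [CharP F p] [PerfectRing F p] :
    ∃ g : ℕ → LaurentSeries F → LaurentSeries F, (∀ j, Tendsto (g j) (𝓝 0) (𝓝 0)) ∧
      ∀ f, f = ∑ j ∈ Finset.range p, (HahnSeries.single 1 1 : LaurentSeries F) ^ j * g j f ^ p := by
  choose g hsum hg using laurentSeries_exists_eq_sum_single_pow_mul_pow (F := F) (p := p)
  have hbasis := hasBasis_nhds_zero_exp_neg (LaurentSeries.valuation_surjective F)
  refine ⟨fun j f => g f j, fun j => (hbasis.tendsto_iff hbasis).2 fun n _ => ?_, hsum⟩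
  exact ⟨p * n, trivial, fun f hf => hg f n hf j⟩

theorem isPBasis_single_one [PerfectRing F p] [CharP (LaurentSeries F) p] :
    IsPBasis p (HahnSeries.single 1 1 : LaurentSeries F) where
  adjoin_eq_top := by
    refine Algebra.eq_top_iff.2 fun f => ?_
    obtain ⟨g, hg, -⟩ := laurentSeries_exists_eq_sum_single_pow_mul_pow (p := p) f
    rw [hg]
    exact sum_mem fun j _ => mul_mem (pow_mem (Algebra.self_mem_adjoin_singleton _ _) j)
      (pow_mem_of_fieldRange_frobenius _ _)
  pow_ne z hz := by
    have horder := congrArg HahnSeries.order hz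
    rw [HahnSeries.order_pow, HahnSeries.order_single one_ne_zero, nsmul_eq_mul] at horder
    have hdvd : (p : ℤ) ∣ 1 := ⟨z.order, horder.symm⟩
    exact (Fact.out : p.Prime).ne_one (by exact_mod_cast Int.eq_one_of_dvd_one (by positivity) hdvd)

section Continuity

variable [PerfectRing F p] {A : Type*} [Ring A] [TopologicalSpace A] [IsTopologicalRing A]

theorem continuous_of_continuous_map_pow (ψ : LaurentSeries F →+* A)
    (hψ : Continuous fun x => ψ (x ^ p)) : Continuous ψ := by
  obtain ⟨g, hg, hsum⟩ := laurentSeries_exists_tendsto_eq_sum F p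
  refine continuous_of_continuousAt_zero ψ ?_
  have hterm (j : ℕ) :
      Tendsto (fun f => ψ (HahnSeries.single 1 1) ^ j * ψ (g j f ^ p)) (𝓝 0) (𝓝 0) := by
    have hp : p ≠ 0 := (Fact.out : p.Prime).ne_zero
    simpa [hp] using ((hψ.tendsto 0).comp (hg j)).const_mul (ψ (HahnSeries.single 1 1) ^ j)
  have hψ_eq (f) : ψ f =
      ∑ j ∈ Finset.range p, ψ (HahnSeries.single 1 1) ^ j * ψ (g j f ^ p) := by
    conv_lhs => rw [hsum f]
    simp only [map_sum, map_mul, map_pow]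
  simpa only [ContinuousAt, map_zero, Finset.sum_const_zero, ← hψ_eq] using
    tendsto_finsetSum (Finset.range p) fun j _ => hterm j

theorem continuous_of_continuous_map_pow_pow [CharP (LaurentSeries F) p] (k : ℕ)
    (ψ : LaurentSeries F →+* A) (hψ : Continuous fun x => ψ (x ^ p ^ k)) : Continuous ψ := by
  induction k generalizing ψ with
  | zero => simpa using hψ
  | succ k ih =>
    refine continuous_of_continuous_map_pow (p := p) ψ (ih (ψ.comp (frobenius _ p)) ?_)
    simpa only [RingHom.comp_apply, frobenius_def, ← pow_mul, ← pow_succ] using hψ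

end Continuity

end LaurentSeries

theorem stmt_8_general (p : ℕ) [Fact p.Prime] {F : Type*} [Field F] [CharP F p] [PerfectRing F p]
    {S : Type*} [Field S] [Algebra (LaurentSeries F) S] [Algebra.IsSeparable (LaurentSeries F) S]
    [Algebra F S] {A : Type*} [Ring A] [Nontrivial A] [TopologicalSpace A] [IsTopologicalRing A]
    [Algebra S A] [Algebra (LaurentSeries F) A] [IsScalarTower (LaurentSeries F) S A]
    [Algebra F A] [IsScalarTower F S A] (hι : Continuous (algebraMap (LaurentSeries F) A))
    {d : ℕ} (hA : ∀ b : A, IsNilpotent b → b ^ d = 0) {N : A} (hN : IsNilpotent N) :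
    (∃ φ : S →ₐ[F] A,
      (φ (algebraMap (LaurentSeries F) S (laurentT F)) =
          algebraMap (LaurentSeries F) A (laurentT F) + N ∧
        Continuous (fun x : LaurentSeries F => φ (algebraMap (LaurentSeries F) S x)) ∧
        ∀ x, IsNilpotent (φ x - algebraMap S A x)) ∧
      ∀ ψ : S →ₐ[F] A,
        ψ (algebraMap (LaurentSeries F) S (laurentT F)) =
          algebraMap (LaurentSeries F) A (laurentT F) + N →
        (∀ x, IsNilpotent (ψ x - algebraMap S A x)) → ψ = φ) ∧
    ∀ φ : S →ₐ[F] A, Function.Injective φ := by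
  have : CharP (LaurentSeries F) p :=
    charP_of_injective_algebraMap (algebraMap F (LaurentSeries F)).injective p
  have : CharP S p := charP_of_injective_algebraMap (algebraMap F S).injective p
  have : CharP A p := charP_of_injective_algebraMap (algebraMap F A).injective p
  have hT : IsPBasis p (algebraMap (LaurentSeries F) S (laurentT F)) :=
    isPBasis_single_one.inv.algebraMap_of_isSeparable
  refine ⟨?_, fun φ => φ.toRingHom.injective⟩
  obtain ⟨φ, hφT, k, hφ⟩ := hT.exists_algHom_of_isNilpotent_sub (F := F)
    (a := algebraMap _ A (laurentT F) + N)
    (by rwa [← IsScalarTower.algebraMap_apply, add_sub_cancel_left])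
  have hφnil (x : S) : IsNilpotent (φ x - algebraMap S A x) :=
    (isNilpotent_sub_iff_exists_pow_char_pow_eq p (Algebra.commute_algebraMap_right x _)).2
      ⟨k, by rw [← map_pow, hφ, map_pow]⟩
  have hφcont : Continuous fun x : LaurentSeries F => φ (algebraMap _ S x) := by
    refine continuous_of_continuous_map_pow_pow (p := p) k (φ.toRingHom.comp (algebraMap _ S)) ?_
    have hφK (x : LaurentSeries F) :
        φ (algebraMap _ S (x ^ p ^ k)) = algebraMap _ A x ^ p ^ k := by
      rw [map_pow, hφ, ← map_pow, ← IsScalarTower.algebraMap_apply, map_pow]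
    exact (hι.pow _).congr fun x => (hφK x).symm
  refine ⟨φ, ⟨hφT, hφcont, hφnil⟩, fun ψ hψT hψnil => AlgHom.coe_ringHom_injective ?_⟩
  exact hT.ringHom_ext_of_sub_pow_eq_zero (hψT.trans hφT.symm) (fun x => hA _ (hψnil x))
    (fun x => hA _ (hφnil x))

/-- given a nilpotent `t×t` matrix `N` over `C_∞`, there is exactly one
`𝔽_r`-algebra homomorphism `φ : K^sep → M_t(C_∞)` with `φ(T) = ι(T)·1 + N`, whose restriction
to `K` is continuous, and all of whose values have the form `ι(x)·1 + (nilpotent)`; moreover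
`φ` is injective. -/
theorem stmt_8 (p m : ℕ) [Fact p.Prime] (hm : 0 < m)
    (Fr : Type*) [Field Fr] [Fintype Fr] (hcard : Fintype.card Fr = p ^ m)
    (Ω : Type*) [Field Ω] [Algebra (LaurentSeries Fr) Ω] [IsAlgClosure (LaurentSeries Fr) Ω]
    [Algebra Fr Ω] [IsScalarTower Fr (LaurentSeries Fr) Ω]
    (C : Type*) [NormedField C] [CompleteSpace C] [IsAlgClosed C] [IsUltrametricDist C]
    [Algebra Ω C] [Algebra (LaurentSeries Fr) C] [IsScalarTower (LaurentSeries Fr) Ω C]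
    [Algebra Fr C] [IsScalarTower Fr Ω C]
    (hι : Continuous (algebraMap (LaurentSeries Fr) C))
    (t : ℕ) (ht : 1 ≤ t) (N : Matrix (Fin t) (Fin t) C) (hN : IsNilpotent N) :
    (∃! φ : separableClosure (LaurentSeries Fr) Ω →ₐ[Fr] Matrix (Fin t) (Fin t) C,
        φ (algebraMap (LaurentSeries Fr) (separableClosure (LaurentSeries Fr) Ω)
            (laurentT Fr)) =
          algebraMap C (Matrix (Fin t) (Fin t) C) (algebraMap (LaurentSeries Fr) C
            (laurentT Fr)) + N ∧
        Continuous (fun x : LaurentSeries Fr =>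
          φ (algebraMap (LaurentSeries Fr) (separableClosure (LaurentSeries Fr) Ω) x)) ∧
        ∀ x : separableClosure (LaurentSeries Fr) Ω,
          IsNilpotent (φ x -
            algebraMap C (Matrix (Fin t) (Fin t) C) (algebraMap Ω C (x : Ω)))) ∧
    ∀ φ : separableClosure (LaurentSeries Fr) Ω →ₐ[Fr] Matrix (Fin t) (Fin t) C,
      (φ (algebraMap (LaurentSeries Fr) (separableClosure (LaurentSeries Fr) Ω)
            (laurentT Fr)) =
          algebraMap C (Matrix (Fin t) (Fin t) C) (algebraMap (LaurentSeries Fr) C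
            (laurentT Fr)) + N ∧
        Continuous (fun x : LaurentSeries Fr =>
          φ (algebraMap (LaurentSeries Fr) (separableClosure (LaurentSeries Fr) Ω) x)) ∧
        ∀ x : separableClosure (LaurentSeries Fr) Ω,
          IsNilpotent (φ x -
            algebraMap C (Matrix (Fin t) (Fin t) C) (algebraMap Ω C (x : Ω)))) →
      Function.Injective φ := by
  have : CharP Fr p := charP_of_card_eq_prime_pow hcard
  have : Nonempty (Fin t) := ⟨⟨0, ht⟩⟩
  have : IsScalarTower Fr (separableClosure (LaurentSeries Fr) Ω) C :=
    .of_algebraMap_eq (IsScalarTower.algebraMap_apply Fr Ω C)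
  have : IsScalarTower (LaurentSeries Fr) (separableClosure (LaurentSeries Fr) Ω) C :=
    .of_algebraMap_eq (IsScalarTower.algebraMap_apply (LaurentSeries Fr) Ω C)
  obtain ⟨⟨φ, hφ, huniq⟩, hinj⟩ := stmt_8_general p (F := Fr)
    (S := separableClosure (LaurentSeries Fr) Ω) (A := Matrix (Fin t) (Fin t) C)
    ((continuous_algebraMap C _).comp hι) (fun _ => matrix_pow_card_eq_zero_of_isNilpotent) hN
  exact ⟨⟨φ, hφ, fun ψ hψ => huniq ψ hψ.1 hψ.2.2⟩, fun φ _ => hinj φ⟩
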